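/- For every n ≥ 1, the number (2n)!/(2^n · n!) of pair partitions of [2n] satisfies (2n)!/(2^n · n!) = Σ_{σ ∈ NC_{2n}} Π_{B ∈ σ} P_{|B|}, where the sum runs over all noncrossing partitions σ of [2n], the product runs over the blocks B of σ, and P_k denotes the number of connected pair partitions of [k] (so P_k = 0 for odd k). -/

import Mathlib

open Finset

open scoped Classical

/-- A partition of `[n]` is noncrossing if there are no two distinct blocks `B₁, B₂`
and elements `a, c ∈ B₁`, `b, d ∈ B₂` with `a < b < c < d`. -/
def IsNoncrossing {n : ℕ} (π : Finpartition (Finset.univ : Finset (Fin n))) : Prop :=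
  ¬ ∃ B₁ ∈ π.parts, ∃ B₂ ∈ π.parts, B₁ ≠ B₂ ∧
      ∃ a ∈ B₁, ∃ b ∈ B₂, ∃ c ∈ B₁, ∃ d ∈ B₂, a < b ∧ b < c ∧ c < d

/-- `S` is a union of blocks of the partition `π`. -/
def IsUnionOfBlocks {n : ℕ} (π : Finpartition (Finset.univ : Finset (Fin n)))
    (S : Finset (Fin n)) : Prop :=
  ∃ P ⊆ π.parts, S = P.sup id

/-- A partition of `[n]` is connected if no proper (nonempty) subinterval of `[n]`
is a union of blocks. -/
def IsConnectedPartition {n : ℕ} (π : Finpartition (Finset.univ : Finset (Fin n))) : Prop :=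
  ∀ i j : Fin n, i ≤ j → Finset.Icc i j ≠ Finset.univ → ¬ IsUnionOfBlocks π (Finset.Icc i j)

/-- A partition of `[n]` is irreducible if no proper initial segment `{1,…,k}`, `1 ≤ k < n`,
is a union of blocks. -/
def IsIrreduciblePartition {n : ℕ} (π : Finpartition (Finset.univ : Finset (Fin n))) : Prop :=
  ∀ k : Fin n, (k : ℕ) + 1 < n → ¬ IsUnionOfBlocks π (Finset.Iic k)

/-- An interval partition of `[n]` is a partition all of whose blocks are intervals
of consecutive integers. -/
def IsIntervalPartition {n : ℕ} (π : Finpartition (Finset.univ : Finset (Fin n))) : Prop :=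
  ∀ B ∈ π.parts, ∃ i j : Fin n, B = Finset.Icc i j

/-- `a_π = ∏_{B ∈ π} a_{|B|}`. -/
noncomputable def partWeight {n : ℕ} (a : ℕ → ℝ)
    (π : Finpartition (Finset.univ : Finset (Fin n))) : ℝ :=
  ∏ B ∈ π.parts, a B.card

/-- The number of connected pair partitions of `[k]` (equal to `0` for odd `k`). -/
noncomputable def connPairCount (k : ℕ) : ℕ :=
  Nat.card {π : Finpartition (Finset.univ : Finset (Fin k)) //
    IsConnectedPartition π ∧ ∀ B ∈ π.parts, B.card = 2}

/-!
Meets of noncrossing partitions are noncrossing, so every partition `π` has a noncrossing closure.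
A noncrossing partition always has an interval among its classes, hence the only noncrossing
partition above a connected one is the trivial one. It follows that a noncrossing `σ` is the
closure of `π` exactly when `π` refines `σ` and is connected on each class of `σ`. Grouping the
partitions by their closure therefore factors the sum of any multiplicative weight over the
classes of `σ`, which is the moment–free cumulant formula. The weight that is `1` on pair
partitions and `0` elsewhere gives the identity between pairing numbers, and pair partitions are
counted as permutations of cycle type `(2, …, 2)`.
-/

section Gluing

variable {α β : Type*} {π r : Setoid α}

theorem le_ker_mem_class_inter (hle : π ≤ r) {q : Quotient r} {S : Set α}
    (hS : π.comap (Subtype.val : Quotient.mk r ⁻¹' {q} → α) ≤ Setoid.ker (· ∈ Subtype.val ⁻¹' S)) :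
    π ≤ Setoid.ker (· ∈ Quotient.mk r ⁻¹' {q} ∩ S) := by
  intro x y hxy
  have hclass : Quotient.mk r x = Quotient.mk r y := Quotient.sound (hle hxy)
  change (Quotient.mk r x = q ∧ x ∈ S) = (Quotient.mk r y = q ∧ y ∈ S)
  rw [hclass]
  exact and_congr_right_eq fun hy => hS (x := ⟨x, hclass.trans hy⟩) (y := ⟨y, hy⟩) hxy

/-- Refinements of a set partition amount to independent choices of a set partition of each of its
classes. -/
def refinementEquivPi (r : Setoid α) :
    {π // π ≤ r} ≃ ∀ q : Quotient r, Setoid (Quotient.mk r ⁻¹' {q}) where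
  toFun π _ := π.1.comap Subtype.val
  invFun ρ :=
    ⟨{ r x y := ∃ q, ∃ (hx : ⟦x⟧ = q) (hy : ⟦y⟧ = q), ρ q ⟨x, hx⟩ ⟨y, hy⟩
       iseqv :=
        { refl x := ⟨_, rfl, rfl, (ρ _).refl _⟩
          symm := fun ⟨q, hx, hy, h⟩ => ⟨q, hy, hx, (ρ q).symm h⟩
          trans := by
            rintro x y z ⟨_, hx, rfl, hxy⟩ ⟨_, rfl, hz, hyz⟩
            exact ⟨_, hx, hz, (ρ _).trans hxy hyz⟩ } },
      fun _ _ ⟨_, hx, hy, _⟩ => Quotient.exact (hx.trans hy.symm)⟩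
  left_inv := fun ⟨π, hπ⟩ => Subtype.ext <| Setoid.ext fun x y =>
    ⟨fun ⟨_, _, _, h⟩ => h, fun h => ⟨_, Quotient.sound (hπ h), rfl, h⟩⟩
  right_inv ρ := by
    funext q
    refine Setoid.ext fun ⟨x, hx⟩ ⟨y, hy⟩ => ⟨?_, fun h => ⟨q, hx, hy, h⟩⟩
    rintro ⟨_, rfl, _, h⟩
    obtain rfl := hx
    exact h

variable {R : Type*} [CommMonoid R] [Fintype α] [Fintype β] (a : ℕ → R)

/-- The multiplicative weight `∏ a |C|` of a set partition, the product running over its classes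
`C`. -/
noncomputable def classProd (π : Setoid α) : R :=
  ∏ q : Quotient π, a (Nat.card (Quotient.mk π ⁻¹' {q}))

theorem classProd_comap_equiv (e : α ≃ β) (π : Setoid β) :
    classProd a (π.comap e) = classProd a π := by
  refine Fintype.prod_equiv (Quotient.congr e fun _ _ => Iff.rfl) _ _ (Quotient.ind fun x => ?_)
  refine congrArg a (Nat.card_congr (e.subtypeEquiv fun y => ?_))
  simp only [Set.mem_preimage, Set.mem_singleton_iff, Quotient.congr_mk, Quotient.eq]
  rfl

theorem classProd_eq_prod_comap (hle : π ≤ r) :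
    classProd a π = ∏ q, classProd a (π.comap (Subtype.val : Quotient.mk r ⁻¹' {q} → α)) := by
  simp only [classProd]
  rw [← Fintype.prod_sigma', ← (Setoid.sigmaQuotientEquivOfLe hle).prod_comp]
  refine Fintype.prod_congr _ _ ?_
  rintro ⟨q, c⟩
  induction c using Quotient.ind with | _ x
  refine congrArg a (Nat.card_congr
    { toFun y := ⟨⟨y, (Quotient.sound (hle (Quotient.exact y.2))).trans x.2⟩,
        Quotient.sound (Quotient.exact y.2 :)⟩
      invFun z := ⟨z.1, Quotient.sound (Quotient.exact z.2 :)⟩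
      left_inv _ := rfl
      right_inv _ := rfl })

end Gluing

section NoncrossingClosure

variable {α β : Type*} [Preorder α] [Preorder β] {r : Setoid α}

/-- Noncrossing set partitions of an ordered set, encoded as equivalence relations: the condition
`r a b` for every crossing `a < b < c < d` says that no two distinct classes cross. -/
def IsNoncrossingSetoid (r : Setoid α) : Prop :=
  ∀ ⦃a b c d⦄, a < b → b < c → c < d → r a c → r b d → r a b

/-- Connected set partitions of an ordered set, encoded as equivalence relations. A set `S` is a
union of classes of `π` precisely when `π ≤ Setoid.ker (· ∈ S)`. -/
def IsConnectedSetoid (π : Setoid α) : Prop :=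
  ∀ i j, i ≤ j → π ≤ Setoid.ker (· ∈ Set.Icc i j) → Set.Icc i j = Set.univ

theorem IsNoncrossingSetoid.comap (hr : IsNoncrossingSetoid r) (e : β ↪o α) :
    IsNoncrossingSetoid (r.comap e) :=
  fun _ _ _ _ hab hbc hcd hac hbd =>
    hr (e.lt_iff_lt.2 hab) (e.lt_iff_lt.2 hbc) (e.lt_iff_lt.2 hcd) hac hbd

theorem isConnectedSetoid_comap_orderIso_iff (e : α ≃o β) (π : Setoid β) :
    IsConnectedSetoid (π.comap e) ↔ IsConnectedSetoid π := by
  refine e.toEquiv.forall_congr fun i => e.toEquiv.forall_congr fun j => ?_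
  refine imp_congr e.le_iff_le.symm (imp_congr ?_ ?_)
  · refine e.toEquiv.forall_congr fun x => e.toEquiv.forall_congr fun y => ?_
    simp [Setoid.ker_def, Setoid.comap_rel]
  · rw [Set.eq_univ_iff_forall, Set.eq_univ_iff_forall]
    exact e.toEquiv.forall_congr fun x => by simp

theorem isNoncrossingSetoid_sInf {S : Set (Setoid α)} (hS : ∀ r ∈ S, IsNoncrossingSetoid r) :
    IsNoncrossingSetoid (sInf S) :=
  fun _ _ _ _ hab hbc hcd hac hbd r hr => hS r hr hab hbc hcd (hac r hr) (hbd r hr)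

/-- The noncrossing closure of a set partition: the finest noncrossing partition coarser than it. -/
def noncrossingClosure : ClosureOperator (Setoid α) :=
  .ofCompletePred IsNoncrossingSetoid fun _ => isNoncrossingSetoid_sInf

theorem isNoncrossingSetoid_noncrossingClosure (π : Setoid α) :
    IsNoncrossingSetoid (noncrossingClosure π) :=
  noncrossingClosure.isClosed_closure π

theorem IsNoncrossingSetoid.inf_ker_mem_ordConnected (hr : IsNoncrossingSetoid r)
    (q : Quotient r) {S : Set α} (hS : S.OrdConnected) :
    IsNoncrossingSetoid (r ⊓ Setoid.ker (· ∈ Quotient.mk r ⁻¹' {q} ∩ S)) := by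
  rintro a b c d hab hbc hcd ⟨hac, hac'⟩ ⟨hbd, hbd'⟩
  have hrab : r a b := hr hab hbc hcd hac hbd
  have hclass : Quotient.mk r a = q ↔ Quotient.mk r b = q := by rw [Quotient.sound hrab]
  refine ⟨hrab, propext ⟨fun ha => ?_, fun hb => ?_⟩⟩
  · have hc := hac'.mp ha
    exact ⟨hclass.1 ha.1, hS.out ha.2 hc.2 ⟨hab.le, hbc.le⟩⟩
  · have hd := hbd'.mp hb
    have hc : c ∈ S := hS.out hb.2 hd.2 ⟨hbc.le, hcd.le⟩
    exact hac'.mpr ⟨(Quotient.sound hac).symm.trans (hclass.2 hb.1), hc⟩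

/-- Otherwise cutting the class `q` along an interval would give a finer noncrossing partition. -/
theorem isConnectedSetoid_comap_noncrossingClosure (π : Setoid α)
    (q : Quotient (noncrossingClosure π)) :
    IsConnectedSetoid (π.comap (Subtype.val : Quotient.mk (noncrossingClosure π) ⁻¹' {q} → α)) := by
  intro i j hij hsat
  have hle := noncrossingClosure.le_closure π
  have hsplit : noncrossingClosure π ≤
      Setoid.ker (· ∈ Quotient.mk (noncrossingClosure π) ⁻¹' {q} ∩ Set.Icc (i : α) j) :=
    (noncrossingClosure.closure_min (le_inf hle (le_ker_mem_class_inter hle hsat))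
      ((isNoncrossingSetoid_noncrossingClosure π).inf_ker_mem_ordConnected q
        Set.ordConnected_Icc)).trans inf_le_right
  refine Set.eq_univ_of_forall fun y => ?_
  have hiy : noncrossingClosure π i y := Quotient.exact (i.2.trans y.2.symm)
  exact ((hsplit hiy).mp ⟨i.2, le_rfl, hij⟩).2

section LinearOrder

variable {α : Type*} [LinearOrder α] [Finite α] {π r s : Setoid α}

/-- The class whose least element is largest is an interval: the class of any element in one of
its gaps would start further left, hence cross it. -/
theorem IsNoncrossingSetoid.exists_class_eq_Icc [Nonempty α]
    (hr : IsNoncrossingSetoid r) : ∃ i j, i ≤ j ∧ {x | r i x} = Set.Icc i j := by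
  have exists_least (x : α) : ∃ m, r x m ∧ ∀ y, r x y → m ≤ y :=
    Set.exists_min_image {y | r x y} id (Set.toFinite _) ⟨x, r.refl x⟩
  obtain ⟨m, hm, hm_le⟩ := exists_least (Classical.arbitrary α)
  obtain ⟨i, hi_least, hi_max⟩ := Set.exists_max_image {i | ∀ y, r i y → i ≤ y} id
    (Set.toFinite _) ⟨m, fun y hy => hm_le y (r.trans hm hy)⟩
  obtain ⟨j, hij, hj_max⟩ := Set.exists_max_image {y | r i y} id (Set.toFinite _) ⟨i, r.refl i⟩
  refine ⟨i, j, hi_least j hij, Set.ext fun x => ⟨fun hx => ⟨hi_least x hx, hj_max x hx⟩, ?_⟩⟩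
  rintro ⟨hix, hxj⟩
  by_contra hx : ¬ r i x
  obtain ⟨m, hxm, hm_le⟩ := exists_least x
  have hmi : m < i := by
    refine lt_of_le_of_ne (hi_max m fun y hy => hm_le y (r.trans hxm hy)) ?_
    rintro rfl
    exact hx (r.symm hxm)
  have hix' : i < x := hix.lt_of_ne (by rintro rfl; exact hx (r.refl _))
  have hxj' : x < j := hxj.lt_of_ne (by rintro rfl; exact hx hij)
  have hmi_rel : r m i := hr hmi hix' hxj' (r.symm hxm) hij
  exact hx (r.symm (r.trans hxm hmi_rel))

theorem IsConnectedSetoid.eq_top_of_le (hπ : IsConnectedSetoid π) (hle : π ≤ s)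
    (hs : IsNoncrossingSetoid s) : s = ⊤ := by
  cases isEmpty_or_nonempty α
  · exact Setoid.ext isEmptyElim
  obtain ⟨i, j, hij, hclass⟩ := hs.exists_class_eq_Icc
  have hsat : π ≤ Setoid.ker (· ∈ Set.Icc i j) := by
    intro x y hxy
    rw [Setoid.ker_def, ← hclass]
    exact propext ⟨fun hx => s.trans hx (hle hxy), fun hy => s.trans hy (s.symm (hle hxy))⟩
  have hall (x : α) : s i x :=
    (Set.eq_univ_iff_forall.1 (hclass.trans (hπ i j hij hsat))) x
  exact Setoid.eq_top_iff.2 fun x y => s.trans (s.symm (hall x)) (hall y)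

theorem noncrossingClosure_eq_iff (hr : IsNoncrossingSetoid r) :
    noncrossingClosure π = r ↔ π ≤ r ∧
      ∀ q, IsConnectedSetoid (π.comap (Subtype.val : Quotient.mk r ⁻¹' {q} → α)) := by
  constructor
  · rintro rfl
    exact ⟨noncrossingClosure.le_closure π, isConnectedSetoid_comap_noncrossingClosure π⟩
  · rintro ⟨hle, hconn⟩
    refine le_antisymm (noncrossingClosure.closure_min hle hr) fun x y hxy => ?_
    let e : Quotient.mk r ⁻¹' {⟦x⟧} ↪o α := OrderEmbedding.subtype _
    have htop : (noncrossingClosure π).comap e = ⊤ :=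
      (hconn ⟦x⟧).eq_top_of_le (fun _ _ h => noncrossingClosure.le_closure π h)
        ((isNoncrossingSetoid_noncrossingClosure π).comap e)
    exact Setoid.eq_top_iff.1 htop ⟨x, rfl⟩ ⟨y, (Quotient.sound hxy).symm⟩

end LinearOrder

end NoncrossingClosure

section Finpartitions

variable {α : Type*} [DecidableEq α]

theorem parts_eq_image_part {s : Finset α} (σ : Finpartition s) : σ.parts = s.image σ.part := by
  ext B
  rw [mem_image]
  refine ⟨fun hB => σ.part_surjOn hB, ?_⟩
  rintro ⟨x, hx, rfl⟩
  exact σ.part_mem.2 hx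

/-- Partitions into blocks and equivalence relations encode the same set partitions. -/
noncomputable def finpartitionEquivSetoid (α : Type*) [Fintype α] [DecidableEq α] :
    Finpartition (univ : Finset α) ≃ Setoid α where
  toFun σ := Setoid.ker σ.part
  invFun r := Finpartition.ofSetoid r
  left_inv σ := by
    have hpart : (Finpartition.ofSetoid (Setoid.ker σ.part)).part = σ.part := by
      ext x y
      rw [Finpartition.mem_part_ofSetoid_iff_rel, Setoid.ker_def, eq_comm,
        σ.mem_part_iff_part_eq_part (mem_univ y) (mem_univ x)]
    exact Finpartition.ext (by simp only [parts_eq_image_part, hpart])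
  right_inv r := Setoid.ext fun x y => by
    rw [Setoid.ker_def, eq_comm, ← Finpartition.mem_part_iff_part_eq_part _ (mem_univ y)
      (mem_univ x), Finpartition.mem_part_ofSetoid_iff_rel]

noncomputable instance instFintypeSetoid (α : Type*) [Fintype α] : Fintype (Setoid α) :=
  Fintype.ofEquiv _ (finpartitionEquivSetoid α)

theorem finpartitionEquivSetoid_rel [Fintype α] (σ : Finpartition (univ : Finset α)) {x y : α} :
    finpartitionEquivSetoid α σ x y ↔ y ∈ σ.part x := by
  rw [σ.mem_part_iff_part_eq_part (mem_univ y) (mem_univ x), eq_comm]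
  rfl

theorem prod_parts_eq_classProd {R : Type*} [CommMonoid R] (a : ℕ → R) [Fintype α]
    (σ : Finpartition (univ : Finset α)) :
    ∏ B ∈ σ.parts, a #B = classProd a (finpartitionEquivSetoid α σ) := by
  symm
  refine prod_bij (fun q _ => Setoid.kerLift σ.part q)
    (fun q _ => q.inductionOn fun x => σ.part_mem.2 (mem_univ x))
    (fun _ _ _ _ h => Setoid.kerLift_injective σ.part h) (fun B hB => ?_) fun q _ => ?_
  · obtain ⟨x, -, hx⟩ := σ.part_surjOn hB
    exact ⟨⟦x⟧, mem_univ _, hx⟩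
  · induction q using Quotient.ind with | _ x
    refine congrArg a (Nat.subtype_card (σ.part x) fun y => ?_)
    rw [← finpartitionEquivSetoid_rel, Setoid.comm']
    exact Quotient.eq.symm

theorem isNoncrossing_iff {n : ℕ} (σ : Finpartition (univ : Finset (Fin n))) :
    IsNoncrossing σ ↔ IsNoncrossingSetoid (finpartitionEquivSetoid _ σ) := by
  have mem_part (x : Fin n) : x ∈ σ.part x := σ.mem_part_self.2 (mem_univ x)
  have part_mem (x : Fin n) : σ.part x ∈ σ.parts := σ.part_mem.2 (mem_univ x)
  constructor
  · intro h a b c d hab hbc hcd hac hbd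
    by_contra hne
    exact h ⟨_, part_mem a, _, part_mem b, hne, a, mem_part a, b, mem_part b,
      c, (finpartitionEquivSetoid_rel σ).1 hac, d, (finpartitionEquivSetoid_rel σ).1 hbd,
      hab, hbc, hcd⟩
  · rintro h ⟨B₁, hB₁, B₂, hB₂, hne, a, ha, b, hb, c, hc, d, hd, hab, hbc, hcd⟩
    have part_eq {B : Finset (Fin n)} (hB : B ∈ σ.parts) {x : Fin n} (hx : x ∈ B) :=
      σ.part_eq_of_mem hB hx
    have hpart : σ.part a = σ.part b := h hab hbc hcd
      ((part_eq hB₁ ha).trans (part_eq hB₁ hc).symm)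
      ((part_eq hB₂ hb).trans (part_eq hB₂ hd).symm)
    exact hne ((part_eq hB₁ ha).symm.trans (hpart.trans (part_eq hB₂ hb)))

theorem isUnionOfBlocks_iff {n : ℕ} (σ : Finpartition (univ : Finset (Fin n)))
    (S : Finset (Fin n)) :
    IsUnionOfBlocks σ S ↔ finpartitionEquivSetoid _ σ ≤ Setoid.ker (· ∈ S) := by
  constructor
  · rintro ⟨P, hP, rfl⟩ x y hxy
    refine propext ?_
    simp only [mem_sup, id]
    refine exists_congr fun B => and_congr_right fun hB => ?_
    rw [← σ.part_eq_iff_mem (hP hB), ← σ.part_eq_iff_mem (hP hB), show σ.part x = σ.part y from hxy]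
  · intro h
    refine ⟨S.image σ.part, ?_, ?_⟩
    · exact parts_eq_image_part σ ▸ image_subset_image (subset_univ S)
    · ext x
      simp only [mem_sup, mem_image, id, exists_exists_and_eq_and]
      refine ⟨fun hx => ⟨x, hx, σ.mem_part_self.2 (mem_univ x)⟩, ?_⟩
      rintro ⟨y, hy, hxy⟩
      exact (h ((finpartitionEquivSetoid_rel σ).2 hxy)).mp hy

theorem isConnectedPartition_iff {n : ℕ} (σ : Finpartition (univ : Finset (Fin n))) :
    IsConnectedPartition σ ↔ IsConnectedSetoid (finpartitionEquivSetoid _ σ) := by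
  refine forall₂_congr fun i j => forall_congr' fun _ => ?_
  rw [isUnionOfBlocks_iff, ne_eq, not_imp_not, ← coe_eq_univ, coe_Icc]
  simp only [Set.mem_Icc, mem_Icc]

end Finpartitions

section ConnectedSums

variable {R : Type*} [CommSemiring R] (a : ℕ → R)

/-- The total weight of the connected set partitions of `α`. -/
noncomputable def connectedSum (α : Type*) [Preorder α] [Fintype α] : R :=
  ∑ π : Setoid α with IsConnectedSetoid π, classProd a π

theorem connectedSum_congr {α β : Type*} [Preorder α] [Fintype α] [Preorder β] [Fintype β]
    (e : α ≃o β) : connectedSum a α = connectedSum a β := by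
  refine sum_nbij' (Setoid.comap e.symm) (Setoid.comap e) ?_ ?_ ?_ ?_ ?_
  · simp [isConnectedSetoid_comap_orderIso_iff]
  · simp [isConnectedSetoid_comap_orderIso_iff]
  · exact fun π _ => Setoid.ext fun x y => by simp [Setoid.comap_rel]
  · exact fun π _ => Setoid.ext fun x y => by simp [Setoid.comap_rel]
  · exact fun π _ => (classProd_comap_equiv a e.symm.toEquiv π).symm

variable {α : Type*} [LinearOrder α] [Fintype α]

theorem connectedSum_eq_connectedSum_fin :
    connectedSum a α = connectedSum a (Fin (Nat.card α)) :=
  connectedSum_congr a (Fintype.orderIsoFinOfCardEq α Nat.card_eq_fintype_card.symm).symm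

theorem sum_noncrossingClosure_fiber {r : Setoid α} (hr : IsNoncrossingSetoid r) :
    ∑ π with noncrossingClosure π = r, classProd a π =
      classProd (fun k => connectedSum a (Fin k)) r := by
  calc ∑ π with noncrossingClosure π = r, classProd a π
      = ∑ π : {π // π ≤ r} with ∀ q, IsConnectedSetoid (refinementEquivPi r π q),
          ∏ q, classProd a (refinementEquivPi r π q) := by
        symm
        refine sum_nbij Subtype.val (fun π hπ => ?_) Subtype.val_injective.injOn (fun π hπ => ?_)
          fun π _ => (classProd_eq_prod_comap a π.2).symm
        · exact mem_filter.2 ⟨mem_univ _, (noncrossingClosure_eq_iff hr).2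
            ⟨π.2, (mem_filter.1 hπ).2⟩⟩
        · obtain ⟨hle, hconn⟩ := (noncrossingClosure_eq_iff hr).1 (mem_filter.1 hπ).2
          exact ⟨⟨π, hle⟩, mem_filter.2 ⟨mem_univ _, hconn⟩, rfl⟩
    _ = ∑ ρ ∈ Fintype.piFinset fun q => {ρ : Setoid (Quotient.mk r ⁻¹' {q}) | IsConnectedSetoid ρ},
          ∏ q, classProd a (ρ q) :=
        sum_equiv (refinementEquivPi r) (by simp) fun _ _ => rfl
    _ = ∏ q : Quotient r, connectedSum a (Quotient.mk r ⁻¹' {q}) := (prod_univ_sum _ _).symm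
    _ = classProd (fun k => connectedSum a (Fin k)) r :=
      Fintype.prod_congr _ _ fun q => connectedSum_eq_connectedSum_fin a

theorem sum_classProd_eq_sum_isNoncrossingSetoid :
    ∑ π : Setoid α, classProd a π =
      ∑ r : Setoid α with IsNoncrossingSetoid r,
        classProd (fun k => connectedSum a (Fin k)) r := by
  rw [← sum_fiberwise_of_maps_to (g := noncrossingClosure)
    fun π _ => mem_filter.2 ⟨mem_univ _, isNoncrossingSetoid_noncrossingClosure π⟩]
  exact sum_congr rfl fun r hr => sum_noncrossingClosure_fiber a (mem_filter.1 hr).2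

theorem connectedSum_fin (k : ℕ) : connectedSum a (Fin k) =
    ∑ π : Finpartition (univ : Finset (Fin k)) with IsConnectedPartition π,
      ∏ B ∈ π.parts, a #B := by
  refine (sum_equiv (finpartitionEquivSetoid _) ?_ fun π _ => prod_parts_eq_classProd a π).symm
  simp [isConnectedPartition_iff]

theorem sum_prod_parts_eq_sum_isNoncrossing_prod_sum_isConnectedPartition (n : ℕ) :
    ∑ π : Finpartition (univ : Finset (Fin n)), ∏ B ∈ π.parts, a #B =
      ∑ σ : Finpartition (univ : Finset (Fin n)) with IsNoncrossing σ, ∏ B ∈ σ.parts,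
        ∑ ρ : Finpartition (univ : Finset (Fin #B)) with IsConnectedPartition ρ,
          ∏ A ∈ ρ.parts, a #A := by
  simp only [← connectedSum_fin]
  calc ∑ π : Finpartition (univ : Finset (Fin n)), ∏ B ∈ π.parts, a #B
      = ∑ π : Setoid (Fin n), classProd a π :=
        Fintype.sum_equiv (finpartitionEquivSetoid _) _ _ (prod_parts_eq_classProd a)
    _ = ∑ r : Setoid (Fin n) with IsNoncrossingSetoid r,
          classProd (fun k => connectedSum a (Fin k)) r :=
        sum_classProd_eq_sum_isNoncrossingSetoid a
    _ = ∑ σ : Finpartition (univ : Finset (Fin n)) with IsNoncrossing σ,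
          ∏ B ∈ σ.parts, connectedSum a (Fin #B) := by
        symm
        exact sum_equiv (finpartitionEquivSetoid _) (by simp [isNoncrossing_iff])
          fun σ _ => prod_parts_eq_classProd (fun k => connectedSum a (Fin k)) σ

end ConnectedSums

section PairPartitions

variable {α : Type*} [Fintype α] [DecidableEq α]

theorem exists_involutive_part_eq_pair {π : Finpartition (univ : Finset α)}
    (hπ : ∀ B ∈ π.parts, #B = 2) :
    ∃ f : α → α, f.Involutive ∧ ∀ x, f x ≠ x ∧ π.part x = {x, f x} := by
  have exists_partner (x : α) : ∃ y, y ≠ x ∧ π.part x = {x, y} := by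
    have hx : x ∈ π.part x := π.mem_part_self.2 (mem_univ x)
    have hcard : #((π.part x).erase x) = 1 := by
      rw [card_erase_of_mem hx, hπ _ (π.part_mem.2 (mem_univ x))]
    obtain ⟨y, hy⟩ := card_eq_one.1 hcard
    refine ⟨y, ne_of_mem_erase (hy ▸ mem_singleton_self y), ?_⟩
    rw [← hy, insert_erase hx]
  choose f hf_ne hf_part using exists_partner
  refine ⟨f, fun x => ?_, fun x => ⟨hf_ne x, hf_part x⟩⟩
  have hmem : f x ∈ π.part x := by simp [hf_part x]
  have hx : f (f x) ∈ π.part (f x) := by simp [hf_part (f x)]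
  rw [π.part_eq_of_mem (π.part_mem.2 (mem_univ x)) hmem, hf_part x, mem_insert, mem_singleton] at hx
  exact hx.resolve_right (hf_ne (f x))

theorem part_ofSetoid_ker_involutive {f : α → α} (hf : f.Involutive) (x : α) :
    (Finpartition.ofSetoid (Setoid.ker fun x => s(x, f x))).part x = {x, f x} := by
  ext y
  rw [Finpartition.mem_part_ofSetoid_iff_rel, Setoid.ker_def, Sym2.eq_iff, mem_insert,
    mem_singleton]
  constructor
  · rintro (⟨hxy, -⟩ | ⟨-, hxy⟩)
    exacts [Or.inl hxy.symm, Or.inr hxy.symm]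
  · rintro (rfl | rfl)
    exacts [Or.inl ⟨rfl, rfl⟩, Or.inr ⟨(hf x).symm, rfl⟩]

theorem card_pairPartition_eq_card_fixedPointFree_involution :
    #{π : Finpartition (univ : Finset α) | ∀ B ∈ π.parts, #B = 2} =
      #{g : Equiv.Perm α | Function.Involutive g ∧ ∀ x, g x ≠ x} := by
  symm
  refine card_bij (fun g _ => Finpartition.ofSetoid (Setoid.ker fun x => s(x, g x))) ?_ ?_ ?_
  · intro g hg
    obtain ⟨-, hinv, hne⟩ := mem_filter.1 hg
    refine mem_filter.2 ⟨mem_univ _, fun B hB => ?_⟩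
    obtain ⟨x, -, rfl⟩ := Finpartition.part_surjOn _ hB
    rw [part_ofSetoid_ker_involutive hinv, card_pair (hne x).symm]
  · intro g hg h hh hgh
    ext x
    have hpart : ({x, g x} : Finset α) = {x, h x} := by
      rw [← part_ofSetoid_ker_involutive (mem_filter.1 hg).2.1, hgh,
        part_ofSetoid_ker_involutive (mem_filter.1 hh).2.1]
    have hmem : g x ∈ ({x, h x} : Finset α) := by simp [← hpart]
    simpa [(mem_filter.1 hg).2.2 x] using hmem
  · intro π hπ
    obtain ⟨f, hinv, hf⟩ := exists_involutive_part_eq_pair (mem_filter.1 hπ).2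
    refine ⟨hinv.toPerm f, mem_filter.2 ⟨mem_univ _, hinv, fun x => (hf x).1⟩,
      Finpartition.ext ?_⟩
    rw [parts_eq_image_part, parts_eq_image_part]
    refine image_congr fun x _ => ?_
    rw [part_ofSetoid_ker_involutive (f := hinv.toPerm f) hinv, (hf x).2]
    rfl

theorem cycleType_eq_replicate_two_iff {n : ℕ} (hα : Fintype.card α = 2 * n) (g : Equiv.Perm α) :
    g.cycleType = Multiset.replicate n 2 ↔ Function.Involutive g ∧ ∀ x, g x ≠ x := by
  have hsq : (∀ b ∈ g.cycleType, b = 2) ↔ Function.Involutive g := by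
    rw [← Equiv.Perm.pow_prime_eq_one_iff, Equiv.ext_iff]
    rfl
  have hsupport : (∀ x, g x ≠ x) ↔ g.cycleType.sum = 2 * n := by
    rw [g.sum_cycleType, ← hα, card_eq_iff_eq_univ]
    simp [eq_univ_iff_forall]
  rw [hsupport, ← hsq, Multiset.eq_replicate, and_comm]
  refine and_congr_right fun h => ?_
  rw [Multiset.eq_replicate_of_mem h, Multiset.card_replicate, Multiset.sum_replicate, smul_eq_mul]
  omega

theorem card_pairPartition_mul_two_pow_mul_factorial {n : ℕ} (hα : Fintype.card α = 2 * n) :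
    #{π : Finpartition (univ : Finset α) | ∀ B ∈ π.parts, #B = 2} * (2 ^ n * n.factorial) =
      (2 * n).factorial := by
  have h := Equiv.Perm.card_of_cycleType_mul_eq α (Multiset.replicate n 2)
  rw [if_pos ⟨by simp [hα, mul_comm], fun a ha => (Multiset.eq_of_mem_replicate ha).ge⟩] at h
  simp only [cycleType_eq_replicate_two_iff hα, hα] at h
  rw [card_pairPartition_eq_card_fixedPointFree_involution, ← h]
  rcases n.eq_zero_or_pos with rfl | hn
  · simp
  · simp [Multiset.toFinset_replicate, hn.ne', mul_comm n 2]

end PairPartitions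

section PairCounts

theorem card_filter_pairPartition {α : Type*} [Fintype α] [DecidableEq α]
    (s : Finset (Finpartition (univ : Finset α))) :
    #{π ∈ s | ∀ B ∈ π.parts, #B = 2} = ∑ π ∈ s, ∏ B ∈ π.parts, if #B = 2 then 1 else 0 := by
  rw [card_filter]
  exact sum_congr rfl fun π _ => by simp [prod_boole]

theorem connPairCount_eq_sum_prod (k : ℕ) :
    connPairCount k =
      ∑ π : Finpartition (univ : Finset (Fin k)) with IsConnectedPartition π,
        ∏ B ∈ π.parts, if #B = 2 then 1 else 0 := by
  rw [← card_filter_pairPartition, filter_filter, ← Fintype.card_subtype,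
    ← Nat.card_eq_fintype_card, connPairCount]

theorem card_pairPartition_eq_sum_isNoncrossing_prod_connPairCount (n : ℕ) :
    #{π : Finpartition (univ : Finset (Fin n)) | ∀ B ∈ π.parts, #B = 2} =
      ∑ σ : Finpartition (univ : Finset (Fin n)) with IsNoncrossing σ,
        ∏ B ∈ σ.parts, connPairCount #B := by
  simp only [card_filter_pairPartition, connPairCount_eq_sum_prod]
  exact sum_prod_parts_eq_sum_isNoncrossing_prod_sum_isConnectedPartition
    (fun k => if k = 2 then 1 else 0) n

end PairCounts

/-- The number `(2n)!/(2^n n!)` of pair partitions of `[2n]` equals the sum over noncrossing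
partitions `σ` of `[2n]` of the product over blocks `B` of `σ` of the number of connected
pair partitions of `[|B|]`. -/
theorem pairings_eq_sum_noncrossing_prod_connected_pairings :
    ∀ n : ℕ, 1 ≤ n →
      ((2 * n).factorial : ℝ) / (2 ^ n * n.factorial)
        = ∑ σ ∈ Finset.univ.filter
            (fun σ : Finpartition (Finset.univ : Finset (Fin (2 * n))) => IsNoncrossing σ),
          ∏ B ∈ σ.parts, (connPairCount B.card : ℝ) := by
  intro n _
  have hcount := card_pairPartition_mul_two_pow_mul_factorial (Fintype.card_fin (2 * n))
  rw [card_pairPartition_eq_sum_isNoncrossing_prod_connPairCount] at hcount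
  rw [div_eq_iff (by positivity)]
  exact_mod_cast hcount.symm
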